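/- arXiv:1611.02349 — 4 statements merged into one kernel-verified Lean document; each statement's English description precedes it below -/
import Mathlib

section
/- Let g : ℝ³×ℝ → ℝ³ be a C^∞ bifurcation problem in three state variables commuting with the action of Z2×Z2×Z2. Then there exist C^∞ functions p, q, r : ℝ³×ℝ → ℝ such that g(x,y,z,λ) = (p(x²,y²,z²,λ)·x, q(x²,y²,z²,λ)·y, r(x²,y²,z²,λ)·z) for all (x,y,z,λ) ∈ ℝ³×ℝ, and moreover p(0,0,0,0) = q(0,0,0,0) = r(0,0,0,0) = 0. -/
/-- A real-valued function of three state variables and one bifurcation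
parameter is smooth if the associated map `ℝ × ℝ × ℝ × ℝ → ℝ` is `C^∞`. -/
def Smooth4 (f : ℝ → ℝ → ℝ → ℝ → ℝ) : Prop :=
  ContDiff ℝ (⊤ : ℕ∞) (fun v : ℝ × ℝ × ℝ × ℝ => f v.1 v.2.1 v.2.2.1 v.2.2.2)

/-- An `ℝ³`-valued function of three state variables and one bifurcation
parameter is smooth if the associated map `ℝ × ℝ × ℝ × ℝ → ℝ × ℝ × ℝ` is `C^∞`. -/
def Smooth4V (g : ℝ → ℝ → ℝ → ℝ → ℝ × ℝ × ℝ) : Prop :=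
  ContDiff ℝ (⊤ : ℕ∞) (fun v : ℝ × ℝ × ℝ × ℝ => g v.1 v.2.1 v.2.2.1 v.2.2.2)

open scoped ContDiff
open Filter Topology MeasureTheory

lemma aux_sq (x : ℝ) : HasDerivAt (fun x : ℝ => x ^ 2) (2 * x) x := by
  simpa using hasDerivAt_pow 2 x

lemma aux_entire : ∃ c : ℝ → ℝ, ContDiff ℝ ∞ c ∧ ∀ x, c (x ^ 2) = Real.cos x := by
  set F : ℕ → ℂ → ℂ := fun n w => (-1) ^ n * w ^ n / ((2 * n).factorial : ℂ) with hF
  have hd : Differentiable ℂ (fun w => ∑' n, F n w) := by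
    intro w
    have h := Complex.differentiableOn_tsum_of_summable_norm (F := F) (U := Metric.ball 0 (‖w‖ + 1))
      (Real.summable_pow_div_factorial (‖w‖ + 1)) (fun i => by simp only [hF]; fun_prop)
      Metric.isOpen_ball (by
        intro n z hz
        have hz' : ‖z‖ ≤ ‖w‖ + 1 := by simpa using (mem_ball_zero_iff.1 hz).le
        simp only [hF, norm_div, norm_mul, norm_pow, norm_neg, norm_one, one_pow, one_mul,
          Complex.norm_natCast]
        have h2 : ((n.factorial : ℕ) : ℝ) ≤ ((2 * n).factorial : ℕ) := by
          exact_mod_cast Nat.factorial_le (by omega)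
        have h3 : (0 : ℝ) < n.factorial := by exact_mod_cast n.factorial_pos
        gcongr)
    exact h.differentiableAt (Metric.isOpen_ball.mem_nhds (by simp))
  refine ⟨fun t => (∑' n, F n (t : ℂ)).re, ?_, ?_⟩
  · have h1 : ContDiff ℝ ∞ (fun w => ∑' n, F n w) := hd.contDiff.restrict_scalars ℝ
    exact Complex.reCLM.contDiff.comp (h1.comp Complex.ofRealCLM.contDiff)
  · intro x
    have := (Complex.hasSum_cos x).tsum_eq
    have e : (∑' n, F n ((x ^ 2 : ℝ) : ℂ)) = Complex.cos x := by
      rw [← this]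
      congr 1; ext n
      simp [hF, pow_mul]
    show (∑' n, F n ((x ^ 2 : ℝ) : ℂ)).re = _
    rw [e]
    exact Complex.cos_ofReal_re x

lemma aux_ode {c : ℝ → ℝ} (hc : ContDiff ℝ ∞ c) (h : ∀ x, c (x ^ 2) = Real.cos x) (k : ℕ) :
    ∀ t : ℝ, 0 < t → 4 * t * iteratedDeriv (k + 2) c t + (4 * k + 2) * iteratedDeriv (k + 1) c t
      + iteratedDeriv k c t = 0 := by
  have hD : ∀ k t, HasDerivAt (iteratedDeriv k c) (iteratedDeriv (k + 1) c t) t := by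
    intro k t
    rw [iteratedDeriv_succ]
    exact ((hc.differentiable_iteratedDeriv k (by exact_mod_cast WithTop.coe_lt_top _)) t).hasDerivAt
  have hsq : ∀ x : ℝ, HasDerivAt (fun x : ℝ => x ^ 2) (2 * x) x := fun x => by
    simpa using hasDerivAt_pow 2 x
  induction k with
  | zero =>
    have h1 : ∀ x, iteratedDeriv 1 c (x ^ 2) * (2 * x) = - Real.sin x := by
      intro x
      have a := (hD 0 (x ^ 2)).comp x (hsq x)
      have b := Real.hasDerivAt_cos x
      have e : (iteratedDeriv 0 c ∘ fun x : ℝ => x ^ 2) = Real.cos := by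
        ext y; simp [h]
      rw [e] at a
      exact a.unique b
    intro t ht
    have a := ((hD 1 (√t ^ 2)).comp (√t) (hsq (√t))).mul ((hasDerivAt_id (√t)).const_mul 2)
    have b := (Real.hasDerivAt_sin (√t)).neg
    have e : ((iteratedDeriv 1 c ∘ fun x : ℝ => x ^ 2) * fun y => 2 * id y) = -Real.sin := by
      ext y; simp [← h1]
    rw [e] at a
    have := a.unique b
    rw [← h] at this
    simp only [Real.sq_sqrt ht.le, id, Function.comp, mul_one] at this
    have s := Real.mul_self_sqrt ht.le
    simp only [iteratedDeriv_zero, Nat.cast_zero]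
    norm_num at this ⊢
    linear_combination this - 4 * iteratedDeriv 2 c t * s
  | succ k ih =>
    intro t ht
    have a := ((((hasDerivAt_id t).const_mul 4).mul (hD (k + 2) t)).add
      ((hD (k + 1) t).const_mul (4 * (k : ℝ) + 2))).add (hD k t)
    have e : (((fun y : ℝ => 4 * id y) * iteratedDeriv (k + 2) c +
      fun y => (4 * (k : ℝ) + 2) * iteratedDeriv (k + 1) c y) + iteratedDeriv k c)
       =ᶠ[𝓝 t] fun _ => 0 := by
      filter_upwards [lt_mem_nhds ht] with y hy
      simpa using ih y hy
    have := a.unique ((hasDerivAt_const t (0 : ℝ)).congr_of_eventuallyEq e)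
    simp only [id] at this
    push_cast
    linear_combination this

lemma aux_bound {c : ℝ → ℝ} (hc : ContDiff ℝ ∞ c) (h : ∀ x, c (x ^ 2) = Real.cos x) (k : ℕ) :
    (∃ B, ∀ t : ℝ, 1 ≤ t → |iteratedDeriv k c t| ≤ B) ∧
    (∃ B, ∀ t : ℝ, 1 ≤ t → |iteratedDeriv (k + 1) c t| ≤ B) := by
  induction k with
  | zero =>
    constructor
    · refine ⟨1, fun t ht => ?_⟩
      rw [iteratedDeriv_zero, ← Real.sq_sqrt (by linarith : (0 : ℝ) ≤ t), h]
      exact Real.abs_cos_le_one _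
    · refine ⟨1, fun t ht => ?_⟩
      have ht0 : (0 : ℝ) ≤ t := by linarith
      have hs : 1 ≤ √t := by rwa [Real.one_le_sqrt]
      have a := (((hc.differentiable (by simp)) (√t ^ 2)).hasDerivAt).comp (√t) (aux_sq (√t))
      have e : (c ∘ fun x : ℝ => x ^ 2) = Real.cos := by
        ext y; simp [h]
      have e' := a.unique (e ▸ Real.hasDerivAt_cos (√t))
      rw [Real.sq_sqrt ht0] at e'
      rw [zero_add, iteratedDeriv_one]
      have := Real.abs_sin_le_one (√t)
      rw [← abs_neg, ← e', abs_mul, abs_of_nonneg (by positivity : 0 ≤ 2 * √t)] at this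
      nlinarith [abs_nonneg (deriv c t)]
  | succ k ih =>
    refine ⟨ih.2, ?_⟩
    obtain ⟨⟨B, hB⟩, ⟨B', hB'⟩⟩ := ih
    refine ⟨(4 * k + 2) * B' + B, fun t ht => ?_⟩
    have := aux_ode hc h k t (by linarith)
    have e : 4 * t * iteratedDeriv (k + 2) c t = -((4 * k + 2) * iteratedDeriv (k + 1) c t
      + iteratedDeriv k c t) := by linarith
    have e2 := congrArg abs e
    rw [abs_neg, abs_mul, abs_of_nonneg (by linarith : 0 ≤ 4 * t)] at e2
    have h3 := abs_add_le ((4 * (k : ℝ) + 2) * iteratedDeriv (k + 1) c t) (iteratedDeriv k c t)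
    rw [abs_mul, abs_of_nonneg (by positivity : 0 ≤ 4 * (k : ℝ) + 2)] at h3
    have h4 : (4 * (k : ℝ) + 2) * |iteratedDeriv (k + 1) c t| ≤ (4 * k + 2) * B' := by
      gcongr; exact hB' t ht
    have := hB t ht
    show |iteratedDeriv (k + 2) c t| ≤ _
    nlinarith [abs_nonneg (iteratedDeriv (k + 2) c t)]

lemma exists_C : ∃ c : ℝ → ℝ, c.HasTemperateGrowth ∧ ∀ x, c (x ^ 2) = Real.cos x := by
  obtain ⟨c, hc, h⟩ := aux_entire
  set d : ℝ → ℝ := fun t => Real.smoothTransition (t + 1) * c t with hd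
  have hds : ContDiff ℝ ∞ d := by
    have : ContDiff ℝ ∞ Real.smoothTransition := Real.smoothTransition.contDiff
    fun_prop
  refine ⟨d, ⟨hds, fun n => ?_⟩, fun x => ?_⟩
  · obtain ⟨B, hB⟩ := (aux_bound hc h n).1
    obtain ⟨B', hB'⟩ := (isCompact_Icc (a := (-1 : ℝ)) (b := 1)).exists_bound_of_continuousOn
      (f := iteratedDeriv n d) (hds.continuous_iteratedDeriv n (by exact_mod_cast le_top)).continuousOn
    refine ⟨0, max (max B B') 0, fun t => ?_⟩
    rw [norm_iteratedFDeriv_eq_norm_iteratedDeriv, pow_zero, mul_one]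
    rcases lt_or_ge t (-1) with h1 | h1
    · have e : d =ᶠ[𝓝 t] fun _ => 0 := by
        filter_upwards [gt_mem_nhds h1] with y hy
        simp [hd, Real.smoothTransition.zero_of_nonpos (by linarith : y + 1 ≤ 0)]
      rw [e.iteratedDeriv_eq]
      simp
    rcases le_or_gt t 1 with h2 | h2
    · exact (hB' t ⟨h1, h2⟩).trans (le_max_of_le_left (le_max_right _ _))
    · have e : d =ᶠ[𝓝 t] c := by
        filter_upwards [lt_mem_nhds (by linarith : 0 < t)] with y hy
        simp [hd, Real.smoothTransition.one_of_one_le (by linarith : 1 ≤ y + 1)]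
      rw [e.iteratedDeriv_eq]
      exact (hB t h2.le).trans (le_max_of_le_left (le_max_left _ _))
  · simp only [hd, h]
    rw [Real.smoothTransition.one_of_one_le (by nlinarith), one_mul]

lemma tg_fderiv {E F : Type*} [NormedAddCommGroup E] [NormedSpace ℝ E] [NormedAddCommGroup F]
    [NormedSpace ℝ F] {f : E → F} (hf : f.HasTemperateGrowth) : (fderiv ℝ f).HasTemperateGrowth := by
  refine ⟨hf.1.fderiv_right (by simp), fun n => ?_⟩
  obtain ⟨k, C, h⟩ := hf.2 (n + 1)
  refine ⟨k, C, fun x => ?_⟩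
  rw [norm_iteratedFDeriv_fderiv]
  exact h x

lemma exists_CS : ∃ c s : ℝ → ℝ, c.HasTemperateGrowth ∧ s.HasTemperateGrowth ∧
    (∀ x, c (x ^ 2) = Real.cos x) ∧ ∀ x, x * s (x ^ 2) = Real.sin x := by
  obtain ⟨c, hc, h⟩ := exists_C
  refine ⟨c, fun t => -2 * fderiv ℝ c t 1, hc, ?_, h, fun x => ?_⟩
  · have := (ContinuousLinearMap.apply ℝ ℝ (1 : ℝ)).hasTemperateGrowth.comp (tg_fderiv hc)
    exact (Function.HasTemperateGrowth.const (-2 : ℝ)).mul this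
  · have a := (((hc.1.differentiable (by simp)) (x ^ 2)).hasDerivAt).comp x (aux_sq x)
    have e : (c ∘ fun x : ℝ => x ^ 2) = Real.cos := by
      ext y; simp [h]
    have e' := a.unique (e ▸ Real.hasDerivAt_cos x)
    show x * (-2 * fderiv ℝ c (x ^ 2) 1) = _
    rw [fderiv_apply_one_eq_deriv]
    linarith

lemma contDiff_param {E V : Type} [NormedAddCommGroup E] [NormedSpace ℝ E]
    [NormedAddCommGroup V] [NormedSpace ℝ V] [MeasurableSpace V]
    [BorelSpace V] [SecondCountableTopology V] {μ : Measure V}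
    {w : V → ℂ} (hw : Continuous w) (hi : ∀ k : ℕ, Integrable (fun ξ => (1 + ‖ξ‖) ^ k * ‖w ξ‖) μ)
    (n : ℕ) : ∀ {G : Type} [NormedAddCommGroup G] [NormedSpace ℝ G] [NormedSpace ℂ G]
    [IsScalarTower ℝ ℂ G] (K : E × V → G), K.HasTemperateGrowth →
    ContDiff ℝ n (fun v => ∫ ξ, w ξ • K (v, ξ) ∂μ) := by
  -- uniform domination
  have dom : ∀ {G : Type} [NormedAddCommGroup G] [NormedSpace ℝ G] [NormedSpace ℂ G]
    [IsScalarTower ℝ ℂ G] (K : E × V → G), K.HasTemperateGrowth → ∀ R : ℝ, 0 ≤ R →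
    ∃ b : V → ℝ, Integrable b μ ∧ ∀ v, ‖v‖ ≤ R → ∀ ξ, ‖w ξ • K (v, ξ)‖ ≤ b ξ := by
    intro G _ _ _ _ K hK R hR
    obtain ⟨k, C, h⟩ := hK.2 0
    refine ⟨fun ξ => (|C| * (1 + R) ^ k) * ((1 + ‖ξ‖) ^ k * ‖w ξ‖), (hi k).const_mul _, ?_⟩
    intro v hv ξ
    have h1 := h (v, ξ)
    rw [norm_iteratedFDeriv_zero] at h1
    have h2 : 1 + ‖(v, ξ)‖ ≤ (1 + R) * (1 + ‖ξ‖) := by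
      have : ‖(v, ξ)‖ ≤ R + ‖ξ‖ := by
        rw [Prod.norm_def]
        exact max_le (by simpa using (by linarith [norm_nonneg ξ] : ‖v‖ ≤ R + ‖ξ‖)) (by simpa using hR)
      nlinarith [norm_nonneg ξ]
    rw [norm_smul]
    calc ‖w ξ‖ * ‖K (v, ξ)‖ ≤ ‖w ξ‖ * (|C| * ((1 + R) * (1 + ‖ξ‖)) ^ k) := by
          gcongr
          refine h1.trans ?_
          gcongr
          exact le_abs_self C
      _ = _ := by rw [mul_pow]; ring
  have meas : ∀ {G : Type} [NormedAddCommGroup G] [NormedSpace ℝ G] [NormedSpace ℂ G]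
    [IsScalarTower ℝ ℂ G] (K : E × V → G), K.HasTemperateGrowth → ∀ v,
      AEStronglyMeasurable (fun ξ => w ξ • K (v, ξ)) μ := by
    intro G _ _ _ _ K hK v
    have := hK.1.continuous
    exact Continuous.aestronglyMeasurable (by fun_prop)
  have deriv : ∀ {G : Type} [NormedAddCommGroup G] [NormedSpace ℝ G] [NormedSpace ℂ G]
    [IsScalarTower ℝ ℂ G] (K : E × V → G), K.HasTemperateGrowth → ∃ K' : E × V → (E →L[ℝ] G),
      K'.HasTemperateGrowth ∧ ∀ v, HasFDerivAt (fun v => ∫ ξ, w ξ • K (v, ξ) ∂μ)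
        (∫ ξ, w ξ • K' (v, ξ) ∂μ) v := by
    intro G _ _ _ _ K hK
    have hK' : (fun p => (fderiv ℝ K p).comp (ContinuousLinearMap.inl ℝ E V)).HasTemperateGrowth :=
      ((ContinuousLinearMap.compL ℝ E (E × V) G).flip
        (ContinuousLinearMap.inl ℝ E V)).hasTemperateGrowth.comp (tg_fderiv hK)
    refine ⟨_, hK', fun v => ?_⟩
    obtain ⟨b, hb, hb'⟩ := dom K hK (‖v‖ + 1) (by positivity)
    obtain ⟨b2, hb2, hb2'⟩ := dom _ hK' (‖v‖ + 1) (by positivity)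
    refine hasFDerivAt_integral_of_dominated_of_fderiv_le (𝕜 := ℝ) (s := Metric.ball v 1)
      (F := fun v ξ => w ξ • K (v, ξ))
      (F' := fun v ξ => w ξ • (fderiv ℝ K (v, ξ)).comp (ContinuousLinearMap.inl ℝ E V))
      (Metric.ball_mem_nhds v one_pos)
      (Eventually.of_forall (meas K hK)) ?_ (meas _ hK' v) (bound := b2) ?_ hb2 ?_
    · exact hb.mono' (meas K hK v) (Eventually.of_forall (hb' v (by simp)))
    · refine Eventually.of_forall fun ξ x hx => hb2' x ?_ ξ
      have := norm_le_norm_add_norm_sub v x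
      have h2 : ‖x - v‖ < 1 := by simpa [dist_eq_norm] using hx
      rw [norm_sub_rev] at h2
      linarith
    · refine Eventually.of_forall fun ξ x hx => ?_
      have h1 : HasFDerivAt K (fderiv ℝ K (x, ξ)) (x, ξ) :=
        ((hK.1.differentiable (by simp)) _).hasFDerivAt
      have h2 : HasFDerivAt (fun x : E => (x, ξ)) (ContinuousLinearMap.inl ℝ E V) x :=
        hasFDerivAt_prodMk_left x ξ
      exact (h1.comp x h2).const_smul (w ξ)
  induction n with
  | zero =>
    intro G _ _ _ _ K hK
    obtain ⟨K', -, h⟩ := deriv K hK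
    rw [Nat.cast_zero, contDiff_zero]
    exact continuous_iff_continuousAt.2 fun v => (h v).continuousAt
  | succ n ih =>
    intro G _ _ _ _ K hK
    obtain ⟨K', hK', h⟩ := deriv K hK
    rw [Nat.cast_succ, contDiff_succ_iff_hasFDerivAt]
    exact ⟨_, ih K' hK', h⟩

open scoped FourierTransform

lemma exp_identity (A B C D : ℝ) (sg : Fin 2 → ℝ) (hsg : sg = ![1, -1]) :
    ∑ i : Fin 2 × Fin 2 × Fin 2, ((sg i.1 : ℝ) : ℂ) *
      Complex.exp ((sg i.1 * A + sg i.2.1 * B + sg i.2.2 * C + D : ℝ) * Complex.I)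
    = 8 * (Complex.I * Real.sin A * Real.cos B * Real.cos C *
      (Real.cos D + Complex.I * Real.sin D)) := by
  subst hsg
  simp only [Fintype.sum_prod_type, Fin.sum_univ_two, Matrix.cons_val_zero, Matrix.cons_val_one]
  push_cast
  simp only [add_mul, Complex.exp_add, one_mul, neg_mul, Complex.exp_neg]
  have key : ∀ z : ℂ, (Complex.exp (z * Complex.I))⁻¹ = Complex.cos z - Complex.sin z * Complex.I := by
    intro z
    rw [← Complex.exp_neg, ← neg_mul, Complex.exp_mul_I, Complex.cos_neg, Complex.sin_neg]; ring
  simp only [key]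
  simp only [Complex.exp_mul_I]
  ring

lemma schwartz_weight {V : Type} [NormedAddCommGroup V] [InnerProductSpace ℝ V]
    [FiniteDimensional ℝ V] [MeasurableSpace V] [BorelSpace V] (a : SchwartzMap V ℂ) (k : ℕ) :
    Integrable (fun ξ => (1 + ‖ξ‖) ^ k * ‖a ξ‖) := by
  simp_rw [add_pow, Finset.sum_mul]
  refine integrable_finsetSum _ fun i _ => ?_
  have := (a.integrable_pow_mul volume (k - i)).const_mul ((k.choose i : ℝ))
  refine this.congr (Eventually.of_forall fun ξ => ?_)
  simp only [one_pow, one_mul]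
  ring

lemma local_form (f : ℝ → ℝ → ℝ → ℝ → ℝ) (hf : Smooth4 f) (R : ℝ)
    (hR : ∀ x y z l, f x y z l ≠ 0 → |x| ≤ R ∧ |y| ≤ R ∧ |z| ≤ R ∧ |l| ≤ R)
    (h1 : ∀ x y z l, f (-x) y z l = - f x y z l)
    (h2 : ∀ x y z l, f x (-y) z l = f x y z l)
    (h3 : ∀ x y z l, f x y (-z) l = f x y z l) :
    ∃ p : ℝ → ℝ → ℝ → ℝ → ℝ, Smooth4 p ∧
      ∀ x y z l, f x y z l = p (x ^ 2) (y ^ 2) (z ^ 2) l * x := by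
  obtain ⟨c, s, hc, hs, hcc, hss⟩ := exists_CS
  set φ : EuclideanSpace ℝ (Fin 4) → ℂ := fun u => (f (u 0) (u 1) (u 2) (u 3) : ℂ) with hφ
  have hφs : ContDiff ℝ ∞ φ := by
    have : ContDiff ℝ ∞ (fun u : EuclideanSpace ℝ (Fin 4) => (u 0, u 1, u 2, u 3)) := by fun_prop
    exact Complex.ofRealCLM.contDiff.comp (ContDiff.comp hf this)
  have hφc : HasCompactSupport φ := by
    refine HasCompactSupport.intro (isCompact_closedBall (0 : EuclideanSpace ℝ (Fin 4)) (2 * |R|)) fun u hu => ?_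
    by_contra hne
    apply hu
    have hne' : f (u 0) (u 1) (u 2) (u 3) ≠ 0 := by simpa [hφ] using hne
    obtain ⟨a0, a1, a2, a3⟩ := hR _ _ _ _ hne'
    rw [mem_closedBall_zero_iff, EuclideanSpace.norm_eq]
    apply Real.sqrt_le_iff.2
    refine ⟨by positivity, ?_⟩
    simp only [Fin.sum_univ_four, Real.norm_eq_abs]
    have hRR := le_abs_self R
    have q : ∀ t : ℝ, |t| ≤ R → |t| ^ 2 ≤ |R| ^ 2 := fun t ht => pow_le_pow_left₀ (abs_nonneg t) (ht.trans hRR) 2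
    nlinarith [q _ a0, q _ a1, q _ a2, q _ a3]
  set Φ : SchwartzMap (EuclideanSpace ℝ (Fin 4)) ℂ := hφc.toSchwartzMap hφs with hΦ
  set a : SchwartzMap (EuclideanSpace ℝ (Fin 4)) ℂ := 𝓕 Φ with ha
  have inv : ∀ x y z l : ℝ, (f x y z l : ℂ) = ∫ ξ : EuclideanSpace ℝ (Fin 4),
      Complex.exp (((x * (2 * Real.pi * ξ 0) + y * (2 * Real.pi * ξ 1) + z * (2 * Real.pi * ξ 2)
        + l * (2 * Real.pi * ξ 3) : ℝ) : ℂ) * Complex.I) * a ξ := by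
    intro x y z l
    have e : 𝓕⁻ a = Φ := by rw [ha]; simp
    have e2 := congrArg (fun ψ : SchwartzMap (EuclideanSpace ℝ (Fin 4)) ℂ => ψ (!₂[x, y, z, l] : EuclideanSpace ℝ (Fin 4))) e
    simp only [SchwartzMap.fourierInv_coe, Real.fourierInv_eq'] at e2
    have e3 : Φ (!₂[x, y, z, l] : EuclideanSpace ℝ (Fin 4)) = (f x y z l : ℂ) := by
      simp [hΦ, hφ]
    rw [← e3, ← e2]
    congr 1
    ext ξ
    rw [smul_eq_mul]
    congr 4
    simp [PiLp.inner_apply, Fin.sum_univ_four]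
    ring
  set K : (ℝ × ℝ × ℝ × ℝ) × EuclideanSpace ℝ (Fin 4) → ℂ := fun q =>
    Complex.I * ((2 * Real.pi * q.2 0 : ℝ) : ℂ) * (s (q.1.1 * (2 * Real.pi * q.2 0) ^ 2) : ℂ)
    * (c (q.1.2.1 * (2 * Real.pi * q.2 1) ^ 2) : ℂ) * (c (q.1.2.2.1 * (2 * Real.pi * q.2 2) ^ 2) : ℂ)
    * ((c ((q.1.2.2.2 * (2 * Real.pi * q.2 3)) ^ 2) : ℂ)
      + Complex.I * ((q.1.2.2.2 * (2 * Real.pi * q.2 3) * s ((q.1.2.2.2 * (2 * Real.pi * q.2 3)) ^ 2) : ℝ) : ℂ))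
    with hK
  have hKt : K.HasTemperateGrowth := by
    have p1 : (fun q : (ℝ × ℝ × ℝ × ℝ) × EuclideanSpace ℝ (Fin 4) => q.1.1).HasTemperateGrowth :=
      ((ContinuousLinearMap.fst ℝ ℝ (ℝ × ℝ × ℝ)).comp
        (ContinuousLinearMap.fst ℝ (ℝ × ℝ × ℝ × ℝ) (EuclideanSpace ℝ (Fin 4)))).hasTemperateGrowth
    have p2 : (fun q : (ℝ × ℝ × ℝ × ℝ) × EuclideanSpace ℝ (Fin 4) => q.1.2.1).HasTemperateGrowth :=
      (((ContinuousLinearMap.fst ℝ ℝ (ℝ × ℝ)).comp (ContinuousLinearMap.snd ℝ ℝ (ℝ × ℝ × ℝ))).comp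
        (ContinuousLinearMap.fst ℝ (ℝ × ℝ × ℝ × ℝ) (EuclideanSpace ℝ (Fin 4)))).hasTemperateGrowth
    have p3 : (fun q : (ℝ × ℝ × ℝ × ℝ) × EuclideanSpace ℝ (Fin 4) => q.1.2.2.1).HasTemperateGrowth :=
      ((((ContinuousLinearMap.fst ℝ ℝ ℝ).comp (ContinuousLinearMap.snd ℝ ℝ (ℝ × ℝ))).comp
        (ContinuousLinearMap.snd ℝ ℝ (ℝ × ℝ × ℝ))).comp
        (ContinuousLinearMap.fst ℝ (ℝ × ℝ × ℝ × ℝ) (EuclideanSpace ℝ (Fin 4)))).hasTemperateGrowth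
    have p4 : (fun q : (ℝ × ℝ × ℝ × ℝ) × EuclideanSpace ℝ (Fin 4) => q.1.2.2.2).HasTemperateGrowth :=
      ((((ContinuousLinearMap.snd ℝ ℝ ℝ).comp (ContinuousLinearMap.snd ℝ ℝ (ℝ × ℝ))).comp
        (ContinuousLinearMap.snd ℝ ℝ (ℝ × ℝ × ℝ))).comp
        (ContinuousLinearMap.fst ℝ (ℝ × ℝ × ℝ × ℝ) (EuclideanSpace ℝ (Fin 4)))).hasTemperateGrowth
    have pi : ∀ i, (fun q : (ℝ × ℝ × ℝ × ℝ) × EuclideanSpace ℝ (Fin 4) => 2 * Real.pi * q.2 i).HasTemperateGrowth := by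
      intro i
      have : (fun q : (ℝ × ℝ × ℝ × ℝ) × EuclideanSpace ℝ (Fin 4) => q.2 i).HasTemperateGrowth :=
        ((EuclideanSpace.proj i : EuclideanSpace ℝ (Fin 4) →L[ℝ] ℝ).comp
          (ContinuousLinearMap.snd ℝ (ℝ × ℝ × ℝ × ℝ) (EuclideanSpace ℝ (Fin 4)))).hasTemperateGrowth
      fun_prop
    have r : ∀ {g : (ℝ × ℝ × ℝ × ℝ) × EuclideanSpace ℝ (Fin 4) → ℝ}, g.HasTemperateGrowth →
        (fun q => (g q : ℂ)).HasTemperateGrowth := fun hg => Complex.ofRealCLM.hasTemperateGrowth.comp hg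
    have t0 := r (pi 0)
    have t1 := r (hs.comp (p1.mul ((pi 0).pow 2)))
    have t2 := r (hc.comp (p2.mul ((pi 1).pow 2)))
    have t3 := r (hc.comp (p3.mul ((pi 2).pow 2)))
    have t4 := r (hc.comp ((p4.mul (pi 3)).pow 2))
    have t5 := r ((p4.mul (pi 3)).mul (hs.comp ((p4.mul (pi 3)).pow 2)))
    have I := Function.HasTemperateGrowth.const (E := (ℝ × ℝ × ℝ × ℝ) × EuclideanSpace ℝ (Fin 4)) Complex.I
    exact ((((I.mul t0).mul t1).mul t2).mul t3).mul (t4.add (I.mul t5))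
  have hsm := fun n => contDiff_param a.continuous (schwartz_weight a) n K hKt
  refine ⟨fun t1 t2 t3 l => (∫ ξ, a ξ • K ((t1, t2, t3, l), ξ)).re, ?_, ?_⟩
  · refine contDiff_infty.2 fun n => ?_
    exact Complex.reCLM.contDiff.comp (hsm n)
  · intro x y z l
    set sg : Fin 2 → ℝ := ![1, -1] with hsg
    have e8 : (8 : ℂ) * f x y z l = ∑ i : Fin 2 × Fin 2 × Fin 2, ((sg i.1 : ℝ) : ℂ) *
        (f (sg i.1 * x) (sg i.2.1 * y) (sg i.2.2 * z) l : ℂ) := by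
      simp only [Fintype.sum_prod_type, Fin.sum_univ_two, hsg, Matrix.cons_val_zero,
        Matrix.cons_val_one, one_mul, neg_mul, h1, h2, h3]
      push_cast
      ring
    simp_rw [inv, ← integral_const_mul] at e8
    rw [← integral_finsetSum] at e8
    · have e9 : (f x y z l : ℂ) = (∫ ξ, a ξ • K ((x ^ 2, y ^ 2, z ^ 2, l), ξ)) * x := by
        have h8 : (8 : ℂ) ≠ 0 := by norm_num
        apply mul_left_cancel₀ h8
        rw [inv, ← integral_const_mul, e8, ← integral_mul_const, ← integral_const_mul]
        congr 1
        ext ξ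
        have id8 := exp_identity (x * (2 * Real.pi * ξ 0)) (y * (2 * Real.pi * ξ 1))
          (z * (2 * Real.pi * ξ 2)) (l * (2 * Real.pi * ξ 3)) sg hsg
        simp only [← mul_assoc, ← Finset.sum_mul] at id8 ⊢
        rw [id8]
        simp only [← hcc, ← hss, hK, smul_eq_mul, mul_pow]
        push_cast
        ring
      have := congrArg Complex.re e9
      rw [Complex.ofReal_re, Complex.re_mul_ofReal] at this
      exact this
    · intro i _
      refine Integrable.const_mul ?_ _
      refine (a.integrable (μ := volume)).bdd_mul (c := 1) ?_ ?_
      · refine Continuous.aestronglyMeasurable ?_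
        fun_prop
      · refine Eventually.of_forall fun ξ => ?_
        rw [Complex.norm_exp_ofReal_mul_I]

open scoped Manifold

lemma global_form (f : ℝ → ℝ → ℝ → ℝ → ℝ) (hf : Smooth4 f)
    (h1 : ∀ x y z l, f (-x) y z l = - f x y z l)
    (h2 : ∀ x y z l, f x (-y) z l = f x y z l)
    (h3 : ∀ x y z l, f x y (-z) l = f x y z l) :
    ∃ p : ℝ → ℝ → ℝ → ℝ → ℝ, Smooth4 p ∧
      ∀ x y z l, f x y z l = p (x ^ 2) (y ^ 2) (z ^ 2) l * x := by
  set t : ℝ × ℝ × ℝ × ℝ → Set ℝ := fun v => {w | ∀ x y z : ℝ, x ^ 2 = v.1 → y ^ 2 = v.2.1 →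
    z ^ 2 = v.2.2.1 → f x y z v.2.2.2 = w * x} with ht
  have hconv : ∀ v, Convex ℝ (t v) := by
    intro v a ha b hb r s hr hs hrs x y z hx hy hz
    have e1 := ha x y z hx hy hz
    have e2 := hb x y z hx hy hz
    simp only [smul_eq_mul]
    linear_combination r * e1 + s * e2 - f x y z v.2.2.2 * hrs
  have hloc : ∀ v : ℝ × ℝ × ℝ × ℝ, ∃ U ∈ 𝓝 v, ∃ g : ℝ × ℝ × ℝ × ℝ → ℝ,
      ContMDiffOn 𝓘(ℝ, ℝ × ℝ × ℝ × ℝ) 𝓘(ℝ, ℝ) ∞ g U ∧ ∀ y ∈ U, g y ∈ t y := by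
    intro v
    let θ : ContDiffBump v := ⟨1, 2, by norm_num, by norm_num⟩
    have hθ : ContDiff ℝ ∞ θ := θ.contDiff
    obtain ⟨p, hp, hpe⟩ := local_form
      (fun x y z l => θ (x ^ 2, y ^ 2, z ^ 2, l) * f x y z l) (by
        have : ContDiff ℝ ∞ (fun v : ℝ × ℝ × ℝ × ℝ => (v.1 ^ 2, v.2.1 ^ 2, v.2.2.1 ^ 2, v.2.2.2)) := by
          fun_prop
        exact (hθ.comp this).mul hf) (‖v‖ + 3) (by
        intro x y z l hne
        have hne' : θ (x ^ 2, y ^ 2, z ^ 2, l) ≠ 0 := left_ne_zero_of_mul hne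
        have hm : (x ^ 2, y ^ 2, z ^ 2, l) ∈ Metric.ball v 2 := by
          have := Function.mem_support.2 hne'
          rwa [θ.support_eq] at this
        have hn : ‖(x ^ 2, y ^ 2, z ^ 2, l)‖ ≤ ‖v‖ + 2 := by
          have h5 := norm_le_norm_add_norm_sub v (x ^ 2, y ^ 2, z ^ 2, l)
          rw [Metric.mem_ball, dist_eq_norm, norm_sub_rev] at hm
          linarith
        have hv := norm_nonneg v
        have q : ∀ t : ℝ, ‖t ^ 2‖ ≤ ‖v‖ + 2 → |t| ≤ ‖v‖ + 3 := by
          intro t ht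
          rw [norm_pow, Real.norm_eq_abs] at ht
          nlinarith [abs_nonneg t]
        have n1 := (norm_fst_le (x ^ 2, y ^ 2, z ^ 2, l)).trans hn
        have m := (norm_snd_le (x ^ 2, y ^ 2, z ^ 2, l)).trans hn
        have n2 := (norm_fst_le (y ^ 2, z ^ 2, l)).trans m
        have m2 := (norm_snd_le (y ^ 2, z ^ 2, l)).trans m
        have n3 := (norm_fst_le (z ^ 2, l)).trans m2
        have n4 := (norm_snd_le (z ^ 2, l)).trans m2
        exact ⟨q x n1, q y n2, q z n3, by
          rw [← Real.norm_eq_abs]; exact (n4 : ‖l‖ ≤ _).trans (by linarith)⟩) (by intro x y z l; simp [h1])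
        (by intro x y z l; simp [h2]) (by intro x y z l; simp [h3])
    refine ⟨Metric.ball v 1, Metric.ball_mem_nhds v one_pos, _, hp.contMDiff.contMDiffOn, ?_⟩
    rintro ⟨a, b, c, l⟩ hu x y z rfl rfl rfl
    have := hpe x y z l
    rw [θ.one_of_mem_closedBall (Metric.ball_subset_closedBall hu), one_mul] at this
    exact this
  obtain ⟨g, hg⟩ := exists_contMDiffMap_forall_mem_convex_of_local 𝓘(ℝ, ℝ × ℝ × ℝ × ℝ) hconv hloc
  refine ⟨fun a b c l => g (a, b, c, l), g.contMDiff.contDiff, fun x y z l => ?_⟩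
  exact hg (x ^ 2, y ^ 2, z ^ 2, l) x y z rfl rfl rfl

lemma zero_at (f p : ℝ → ℝ → ℝ → ℝ → ℝ) (hp : Smooth4 p)
    (h : ∀ x y z l, f x y z l = p (x ^ 2) (y ^ 2) (z ^ 2) l * x)
    (hd : HasDerivAt (fun x => f x 0 0 0) 0 0) : p 0 0 0 0 = 0 := by
  have hcd : DifferentiableAt ℝ (fun x : ℝ => p (x ^ 2) 0 0 0) 0 := by
    have : ContDiff ℝ ∞ (fun x : ℝ => (x ^ 2, (0 : ℝ), (0 : ℝ), (0 : ℝ))) := by fun_prop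
    exact ((ContDiff.comp hp this).differentiable (by simp)) 0
  have a := hcd.hasDerivAt.mul (hasDerivAt_id (0 : ℝ))
  have e : (fun x => f x 0 0 0) = (fun x : ℝ => p (x ^ 2) 0 0 0) * id := by
    ext x; simp [h]
  rw [e] at hd
  simpa using (a.unique hd)

/-- a smooth bifurcation problem `g` in three state variables
commuting with the action of `Z2 × Z2 × Z2` has the normal form
`g(x,y,z,λ) = (p(x²,y²,z²,λ)x, q(x²,y²,z²,λ)y, r(x²,y²,z²,λ)z)` with
`p`, `q`, `r` smooth and vanishing at the origin. -/
theorem stmt0 (g : ℝ → ℝ → ℝ → ℝ → ℝ × ℝ × ℝ)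
    (hsmooth : Smooth4V g)
    (h0 : g 0 0 0 0 = 0)
    (hd0 : fderiv ℝ (fun v : ℝ × ℝ × ℝ × ℝ => g v.1 v.2.1 v.2.2.1 v.2.2.2)
      (0, 0, 0, 0) = 0)
    (hequiv : ∀ κ ζ ξ : ℝ, (κ = 1 ∨ κ = -1) → (ζ = 1 ∨ ζ = -1) → (ξ = 1 ∨ ξ = -1) →
      ∀ x y z lam : ℝ,
        g (κ * x) (ζ * y) (ξ * z) lam =
          (κ * (g x y z lam).1, ζ * (g x y z lam).2.1, ξ * (g x y z lam).2.2)) :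
    ∃ p q r : ℝ → ℝ → ℝ → ℝ → ℝ,
      Smooth4 p ∧ Smooth4 q ∧ Smooth4 r ∧
      (∀ x y z lam : ℝ,
        g x y z lam =
          (p (x ^ 2) (y ^ 2) (z ^ 2) lam * x,
           q (x ^ 2) (y ^ 2) (z ^ 2) lam * y,
           r (x ^ 2) (y ^ 2) (z ^ 2) lam * z)) ∧
      p 0 0 0 0 = 0 ∧ q 0 0 0 0 = 0 ∧ r 0 0 0 0 = 0 := by
  have hx : ∀ x y z l, g (-x) y z l = (-(g x y z l).1, (g x y z l).2.1, (g x y z l).2.2) := by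
    intro x y z l
    simpa using hequiv (-1) 1 1 (Or.inr rfl) (Or.inl rfl) (Or.inl rfl) x y z l
  have hy : ∀ x y z l, g x (-y) z l = ((g x y z l).1, -(g x y z l).2.1, (g x y z l).2.2) := by
    intro x y z l
    simpa using hequiv 1 (-1) 1 (Or.inl rfl) (Or.inr rfl) (Or.inl rfl) x y z l
  have hz : ∀ x y z l, g x y (-z) l = ((g x y z l).1, (g x y z l).2.1, -(g x y z l).2.2) := by
    intro x y z l
    simpa using hequiv 1 1 (-1) (Or.inl rfl) (Or.inl rfl) (Or.inr rfl) x y z l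
  have hD : HasFDerivAt (fun v : ℝ × ℝ × ℝ × ℝ => g v.1 v.2.1 v.2.2.1 v.2.2.2)
      (0 : ℝ × ℝ × ℝ × ℝ →L[ℝ] ℝ × ℝ × ℝ) (0, 0, 0, 0) := by
    rw [← hd0]
    exact ((ContDiff.differentiable hsmooth (by simp)) _).hasFDerivAt
  have curve : ∀ γ : ℝ → ℝ × ℝ × ℝ × ℝ, γ 0 = (0, 0, 0, 0) → DifferentiableAt ℝ γ 0 →
      HasDerivAt (fun s => g (γ s).1 (γ s).2.1 (γ s).2.2.1 (γ s).2.2.2) 0 0 := by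
    intro γ hγ hγd
    rw [← hγ] at hD
    have := hD.comp_hasDerivAt 0 hγd.hasDerivAt
    rw [ContinuousLinearMap.zero_apply] at this
    exact this
  have sm : ∀ σ : ℝ × ℝ × ℝ × ℝ → ℝ × ℝ × ℝ × ℝ, ContDiff ℝ ∞ σ →
      ContDiff ℝ ∞ (fun v => g (σ v).1 (σ v).2.1 (σ v).2.2.1 (σ v).2.2.2) := fun σ hσ =>
    ContDiff.comp hsmooth hσ
  obtain ⟨p, hp, hpe⟩ := global_form (fun x y z l => (g x y z l).1) (sm (fun v => v) contDiff_id).fst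
    (by intro x y z l; simp [hx]) (by intro x y z l; simp [hy]) (by intro x y z l; simp [hz])
  obtain ⟨q, hq, hqe⟩ := global_form (fun y x z l => (g x y z l).2.1)
    (sm (fun v => (v.2.1, v.1, v.2.2.1, v.2.2.2)) (by fun_prop)).snd.fst
    (by intro x y z l; simp [hy]) (by intro x y z l; simp [hx]) (by intro x y z l; simp [hz])
  obtain ⟨r, hr, hre⟩ := global_form (fun z x y l => (g x y z l).2.2)
    (sm (fun v => (v.2.1, v.2.2.1, v.1, v.2.2.2)) (by fun_prop)).snd.snd
    (by intro x y z l; simp [hz]) (by intro x y z l; simp [hx]) (by intro x y z l; simp [hy])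
  refine ⟨p, fun a b c l => q b a c l, fun a b c l => r c a b l, hp, ?_, ?_, ?_, ?_, ?_, ?_⟩
  · have : ContDiff ℝ ∞ (fun v : ℝ × ℝ × ℝ × ℝ => (v.2.1, v.1, v.2.2.1, v.2.2.2)) := by fun_prop
    exact ContDiff.comp hq this
  · have : ContDiff ℝ ∞ (fun v : ℝ × ℝ × ℝ × ℝ => (v.2.2.1, v.1, v.2.1, v.2.2.2)) := by fun_prop
    exact ContDiff.comp hr this
  · intro x y z l
    have e1 := hpe x y z l
    have e2 := hqe y x z l
    have e3 := hre z x y l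
    exact Prod.ext e1 (Prod.ext e2 e3)
  · exact zero_at _ p hp hpe (curve (fun s => (s, 0, 0, 0)) rfl (by fun_prop)).fst
  · exact zero_at _ q hq hqe (curve (fun s => (0, s, 0, 0)) rfl (by fun_prop)).snd.fst
  · exact zero_at _ r hr hre (curve (fun s => (0, 0, s, 0)) rfl (by fun_prop)).snd.snd
end

section
/- Let p, q, r : ℝ³×ℝ → ℝ be C^∞ and g(x,y,z,λ) = (p(x²,y²,z²,λ)x, q(x²,y²,z²,λ)y, r(x²,y²,z²,λ)z). Let (x,y,0,λ) be an xy-mixed mode solution, i.e. x ≠ 0, y ≠ 0, and p(u,v,0,λ) = q(u,v,0,λ) = 0 where u = x², v = y². Then the characteristic polynomial of the Jacobian of g with respect to (x,y,z) at (x,y,0,λ) equals (X − r)·(X² − 2(u·p_u + v·q_v)X + 4uv(p_u q_v − p_v q_u)), with r and all partial derivatives evaluated at (u,v,0,λ). Consequently, if Δ := (u·p_u − v·q_v)² + 4uv·p_v q_u ≥ 0, the eigenvalues are r and u·p_u + v·q_v ± √Δ. -/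
open Polynomial

/-- Directional derivatives of one component of the vector field at a point with `z = 0`. -/
lemma component_hasFDerivAt (f : (ℝ × ℝ × ℝ) × ℝ → ℝ) (hf : ContDiff ℝ (⊤ : ℕ∞) f)
    (x y lam : ℝ) (k : Fin 3) :
    ∃ L : (Fin 3 → ℝ) →L[ℝ] ℝ,
      HasFDerivAt (fun v : Fin 3 → ℝ => f ((v 0 ^ 2, v 1 ^ 2, v 2 ^ 2), lam) * v k) L ![x, y, 0] ∧
      ∀ w : Fin 3 → ℝ, L w = f ((x ^ 2, y ^ 2, 0), lam) * w k +
        (2 * x * w 0 * fderiv ℝ f ((x ^ 2, y ^ 2, 0), lam) ((1, 0, 0), 0) +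
         2 * y * w 1 * fderiv ℝ f ((x ^ 2, y ^ 2, 0), lam) ((0, 1, 0), 0)) *
          (![x, y, 0] : Fin 3 → ℝ) k := by
  have hsq : ∀ i : Fin 3, HasFDerivAt (fun v : Fin 3 → ℝ => v i ^ 2) _ ![x, y, 0] :=
    fun i => (hasFDerivAt_apply (𝕜 := ℝ) i (![x, y, 0] : Fin 3 → ℝ)).pow 2
  have hin : HasFDerivAt (fun v : Fin 3 → ℝ => ((v 0 ^ 2, v 1 ^ 2, v 2 ^ 2), lam)) _ ![x, y, 0] :=
    ((hsq 0).prodMk ((hsq 1).prodMk (hsq 2))).prodMk (hasFDerivAt_const lam _)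
  have hfd : HasFDerivAt f (fderiv ℝ f ((x ^ 2, y ^ 2, 0), lam))
      ((fun v : Fin 3 → ℝ => ((v 0 ^ 2, v 1 ^ 2, v 2 ^ 2), lam)) ![x, y, 0]) := by
    have := ((hf.differentiable (by simp)) ((x ^ 2, y ^ 2, 0), lam)).hasFDerivAt
    simpa using this
  have hc := HasFDerivAt.comp (![x, y, 0] : Fin 3 → ℝ)
    (f := fun v : Fin 3 → ℝ => ((v 0 ^ 2, v 1 ^ 2, v 2 ^ 2), lam)) hfd hin
  refine ⟨_, hc.mul (hasFDerivAt_apply (𝕜 := ℝ) k (![x, y, 0] : Fin 3 → ℝ)), fun w => ?_⟩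
  have key : ∀ a b : ℝ, fderiv ℝ f ((x ^ 2, y ^ 2, 0), lam) ((a, b, 0), 0) =
      a * fderiv ℝ f ((x ^ 2, y ^ 2, 0), lam) ((1, 0, 0), 0) +
      b * fderiv ℝ f ((x ^ 2, y ^ 2, 0), lam) ((0, 1, 0), 0) := by
    intro a b
    have : (((a, b, 0), 0) : (ℝ × ℝ × ℝ) × ℝ) =
        a • ((1, 0, 0), 0) + b • ((0, 1, 0), 0) := by simp
    rw [this, map_add, map_smul, map_smul, smul_eq_mul, smul_eq_mul]
  rw [← key]
  simp
  ring

/-- for `g(x,y,z,λ) = (p(x²,y²,z²,λ)x, q(x²,y²,z²,λ)y,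
r(x²,y²,z²,λ)z)` with `p, q, r` smooth, at an `xy`-mixed mode solution
(`x ≠ 0`, `y ≠ 0`, `p(u,v,0,λ) = q(u,v,0,λ) = 0` with `u = x²`, `v = y²`) the
characteristic polynomial of the Jacobian `J` of `g` with respect to `(x,y,z)`
is `(X − r)·(X² − 2(u·p_u + v·q_v)X + 4uv(p_u q_v − p_v q_u))`; consequently,
if `Δ = (u·p_u − v·q_v)² + 4uv·p_v q_u ≥ 0`, the eigenvalues (roots of the
characteristic polynomial) are exactly `r` and `u·p_u + v·q_v ± √Δ`. -/
theorem stmt14 (p q r : (ℝ × ℝ × ℝ) × ℝ → ℝ)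
    (hp : ContDiff ℝ (⊤ : ℕ∞) p) (hq : ContDiff ℝ (⊤ : ℕ∞) q) (hr : ContDiff ℝ (⊤ : ℕ∞) r)
    (x y lam : ℝ) (hx : x ≠ 0) (hy : y ≠ 0)
    (hmodep : p ((x ^ 2, y ^ 2, 0), lam) = 0)
    (hmodeq : q ((x ^ 2, y ^ 2, 0), lam) = 0)
    (J : Matrix (Fin 3) (Fin 3) ℝ)
    (hJ : ∀ i j : Fin 3, J i j =
      (fderiv ℝ (fun v : Fin 3 → ℝ =>
          ![p ((v 0 ^ 2, v 1 ^ 2, v 2 ^ 2), lam) * v 0,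
            q ((v 0 ^ 2, v 1 ^ 2, v 2 ^ 2), lam) * v 1,
            r ((v 0 ^ 2, v 1 ^ 2, v 2 ^ 2), lam) * v 2])
        ![x, y, 0] (Pi.single j 1)) i)
    (pu pv qu qv r0 : ℝ)
    (hpu : pu = fderiv ℝ p ((x ^ 2, y ^ 2, 0), lam) ((1, 0, 0), 0))
    (hpv : pv = fderiv ℝ p ((x ^ 2, y ^ 2, 0), lam) ((0, 1, 0), 0))
    (hqu : qu = fderiv ℝ q ((x ^ 2, y ^ 2, 0), lam) ((1, 0, 0), 0))
    (hqv : qv = fderiv ℝ q ((x ^ 2, y ^ 2, 0), lam) ((0, 1, 0), 0))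
    (hr0 : r0 = r ((x ^ 2, y ^ 2, 0), lam)) :
    J.charpoly =
      (X - C r0) *
        (X ^ 2 - C (2 * (x ^ 2 * pu + y ^ 2 * qv)) * X +
          C (4 * x ^ 2 * y ^ 2 * (pu * qv - pv * qu))) ∧
    (0 ≤ (x ^ 2 * pu - y ^ 2 * qv) ^ 2 + 4 * x ^ 2 * y ^ 2 * pv * qu →
      ∀ μ : ℝ, J.charpoly.IsRoot μ ↔
        μ = r0 ∨
        μ = x ^ 2 * pu + y ^ 2 * qv +
          Real.sqrt ((x ^ 2 * pu - y ^ 2 * qv) ^ 2 + 4 * x ^ 2 * y ^ 2 * pv * qu) ∨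
        μ = x ^ 2 * pu + y ^ 2 * qv -
          Real.sqrt ((x ^ 2 * pu - y ^ 2 * qv) ^ 2 + 4 * x ^ 2 * y ^ 2 * pv * qu)) := by
  obtain ⟨P, hP, hPw⟩ := component_hasFDerivAt p hp x y lam 0
  obtain ⟨Q, hQ, hQw⟩ := component_hasFDerivAt q hq x y lam 1
  obtain ⟨R, hR, hRw⟩ := component_hasFDerivAt r hr x y lam 2
  have hG : HasFDerivAt (fun v : Fin 3 → ℝ =>
          ![p ((v 0 ^ 2, v 1 ^ 2, v 2 ^ 2), lam) * v 0,
            q ((v 0 ^ 2, v 1 ^ 2, v 2 ^ 2), lam) * v 1,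
            r ((v 0 ^ 2, v 1 ^ 2, v 2 ^ 2), lam) * v 2])
        (ContinuousLinearMap.pi ![P, Q, R]) ![x, y, 0] := by
    rw [hasFDerivAt_pi']
    intro i
    fin_cases i
    · exact hP
    · exact hQ
    · exact hR
  rw [hG.fderiv] at hJ
  have hJ' : J = !![2 * x ^ 2 * pu, 2 * x * y * pv, 0;
      2 * x * y * qu, 2 * y ^ 2 * qv, 0; 0, 0, r0] := by
    ext i j
    rw [hJ]
    fin_cases i <;> fin_cases j <;>
      simp [hPw, hQw, hRw, hmodep, hmodeq, ← hpu, ← hpv, ← hqu, ← hqv, ← hr0] <;> ring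
  have hchar : J.charpoly =
      (X - C r0) *
        (X ^ 2 - C (2 * (x ^ 2 * pu + y ^ 2 * qv)) * X +
          C (4 * x ^ 2 * y ^ 2 * (pu * qv - pv * qu))) := by
    rw [hJ', Matrix.charpoly, Matrix.det_fin_three]
    have h2 : (C 2 : ℝ[X]) = 2 := rfl
    have h4 : (C 4 : ℝ[X]) = 4 := rfl
    simp [h2, h4]
    ring
  refine ⟨hchar, fun hD μ => ?_⟩
  rw [hchar]
  have hs := Real.sq_sqrt hD
  set s := Real.sqrt ((x ^ 2 * pu - y ^ 2 * qv) ^ 2 + 4 * x ^ 2 * y ^ 2 * pv * qu)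
  have hfac : ((X - C r0) *
        (X ^ 2 - C (2 * (x ^ 2 * pu + y ^ 2 * qv)) * X +
          C (4 * x ^ 2 * y ^ 2 * (pu * qv - pv * qu)))).eval μ =
      (μ - r0) * ((μ - (x ^ 2 * pu + y ^ 2 * qv + s)) * (μ - (x ^ 2 * pu + y ^ 2 * qv - s))) := by
    simp only [eval_mul, eval_sub, eval_add, eval_pow, eval_X, eval_C]
    linear_combination (μ - r0) * hs
  rw [IsRoot.def, hfac, mul_eq_zero, mul_eq_zero, sub_eq_zero, sub_eq_zero, sub_eq_zero]
end

section
/- Let u, ε, q ∈ ℝ and let X : ℝ³ → ℝ³ be the vector field X(θ1,θ2,θ3) = (u sinθ1 cosθ2 + ε sin2θ1 cos2θ2, u sinθ2 cosθ3 + ε sin2θ2 cos2θ3, u sinθ3 cosθ1 + ε sin2θ3 cos2θ1 + q(1 − cos(θ1−θ2)) sin2θ3). Then the functions h1 = sinθ1, h2 = sinθ2, h3 = sinθ3 are trigonometric invariant algebraic surfaces for X: the directional derivative of h_i along X satisfies X·∇h_i = K_i·h_i, with K1(θ) = cosθ1·(u cosθ2 + 2ε cosθ1 cos2θ2), K2(θ)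 = cosθ2·(u cosθ3 + 2ε cosθ2 cos2θ3), and K3(θ) = cosθ3·(u cosθ1 + 2ε cos2θ1 cosθ3 + 2q(1 − cos(θ1−θ2)) cosθ3). -/
open Real

/-- for the vector field
`X(θ₁,θ₂,θ₃) = (u sinθ₁ cosθ₂ + ε sin2θ₁ cos2θ₂,
u sinθ₂ cosθ₃ + ε sin2θ₂ cos2θ₃,
u sinθ₃ cosθ₁ + ε sin2θ₃ cos2θ₁ + q(1 − cos(θ₁−θ₂)) sin2θ₃)`,
the functions `h₁ = sinθ₁`, `h₂ = sinθ₂`, `h₃ = sinθ₃` are trigonometric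
invariant algebraic surfaces: `X·∇hᵢ = Kᵢ·hᵢ` with
`K₁ = cosθ₁(u cosθ₂ + 2ε cosθ₁ cos2θ₂)`,
`K₂ = cosθ₂(u cosθ₃ + 2ε cosθ₂ cos2θ₃)`,
`K₃ = cosθ₃(u cosθ₁ + 2ε cos2θ₁ cosθ₃ + 2q(1 − cos(θ₁−θ₂)) cosθ₃)`. -/
theorem stmt17 (u ε q : ℝ) (X : ℝ × ℝ × ℝ → ℝ × ℝ × ℝ)
    (hX : X = fun θ : ℝ × ℝ × ℝ =>
      (u * sin θ.1 * cos θ.2.1 + ε * sin (2 * θ.1) * cos (2 * θ.2.1),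
       u * sin θ.2.1 * cos θ.2.2 + ε * sin (2 * θ.2.1) * cos (2 * θ.2.2),
       u * sin θ.2.2 * cos θ.1 + ε * sin (2 * θ.2.2) * cos (2 * θ.1) +
         q * (1 - cos (θ.1 - θ.2.1)) * sin (2 * θ.2.2))) :
    ∀ θ : ℝ × ℝ × ℝ,
      fderiv ℝ (fun w : ℝ × ℝ × ℝ => sin w.1) θ (X θ) =
        (cos θ.1 * (u * cos θ.2.1 + 2 * ε * cos θ.1 * cos (2 * θ.2.1))) *
          sin θ.1 ∧
      fderiv ℝ (fun w : ℝ × ℝ × ℝ => sin w.2.1) θ (X θ) =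
        (cos θ.2.1 * (u * cos θ.2.2 + 2 * ε * cos θ.2.1 * cos (2 * θ.2.2))) *
          sin θ.2.1 ∧
      fderiv ℝ (fun w : ℝ × ℝ × ℝ => sin w.2.2) θ (X θ) =
        (cos θ.2.2 * (u * cos θ.1 + 2 * ε * cos (2 * θ.1) * cos θ.2.2 +
          2 * q * (1 - cos (θ.1 - θ.2.1)) * cos θ.2.2)) * sin θ.2.2 := by
  subst hX
  intro θ
  have h1 : HasFDerivAt (fun w : ℝ × ℝ × ℝ => w.1)
      (ContinuousLinearMap.fst ℝ ℝ (ℝ × ℝ)) θ := hasFDerivAt_fst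
  have h2 : HasFDerivAt (fun w : ℝ × ℝ × ℝ => w.2.1)
      ((ContinuousLinearMap.fst ℝ ℝ ℝ).comp (ContinuousLinearMap.snd ℝ ℝ (ℝ × ℝ))) θ :=
    ((ContinuousLinearMap.fst ℝ ℝ ℝ).comp (ContinuousLinearMap.snd ℝ ℝ (ℝ × ℝ))).hasFDerivAt
  have h3 : HasFDerivAt (fun w : ℝ × ℝ × ℝ => w.2.2)
      ((ContinuousLinearMap.snd ℝ ℝ ℝ).comp (ContinuousLinearMap.snd ℝ ℝ (ℝ × ℝ))) θ :=
    ((ContinuousLinearMap.snd ℝ ℝ ℝ).comp (ContinuousLinearMap.snd ℝ ℝ (ℝ × ℝ))).hasFDerivAt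
  refine ⟨?_, ?_, ?_⟩
  · rw [h1.sin.fderiv]
    simp only [ContinuousLinearMap.smul_apply, ContinuousLinearMap.coe_fst', smul_eq_mul,
      sin_two_mul θ.1]
    ring
  · rw [h2.sin.fderiv]
    simp only [ContinuousLinearMap.smul_apply, ContinuousLinearMap.comp_apply,
      ContinuousLinearMap.coe_fst', ContinuousLinearMap.coe_snd', smul_eq_mul,
      sin_two_mul θ.2.1]
    ring
  · rw [h3.sin.fderiv]
    simp only [ContinuousLinearMap.smul_apply, ContinuousLinearMap.comp_apply,
      ContinuousLinearMap.coe_snd', smul_eq_mul, sin_two_mul θ.2.2]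
    ring
end

section
/- Let u, ε, q ∈ ℝ and let X : ℝ³ → ℝ³ be the vector field X(θ1,θ2,θ3) = (u sinθ1 cosθ2 + ε sin2θ1 cos2θ2, u sinθ2 cosθ3 + ε sin2θ2 cos2θ3, u sinθ3 cosθ1 + ε sin2θ3 cos2θ1 + q(1 − cos(θ1−θ2)) sin2θ3). Then the points (0,0,0), (π,0,0), (0,π,0) and (0,0,π) are equilibria of X (X vanishes there), and the Jacobian matrix of X at these points is diagonal with the following diagonal entries (eigenvalues): at (0,0,0): (u+2ε, u+2ε, u+2ε); at (π,0,0): (−u+2ε, u+2ε, −u+2ε+4q); at (0,π,0): (−u+2ε, −u+2ε, u+2ε+4q); at (0,0,π): (u+2ε, −u+2ε, −u+2ε). -/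
open Real

/-- for the vector field
`X(θ₁,θ₂,θ₃) = (u sinθ₁ cosθ₂ + ε sin2θ₁ cos2θ₂,
u sinθ₂ cosθ₃ + ε sin2θ₂ cos2θ₃,
u sinθ₃ cosθ₁ + ε sin2θ₃ cos2θ₁ + q(1 − cos(θ₁−θ₂)) sin2θ₃)`,
the points `(0,0,0)`, `(π,0,0)`, `(0,π,0)` and `(0,0,π)` are equilibria, and
the Jacobian of `X` at these points is diagonal with diagonal entries
(eigenvalues) `(u+2ε, u+2ε, u+2ε)`, `(−u+2ε, u+2ε, −u+2ε+4q)`,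
`(−u+2ε, −u+2ε, u+2ε+4q)` and `(u+2ε, −u+2ε, −u+2ε)` respectively. -/
theorem stmt19 (u ε q : ℝ) (X : ℝ × ℝ × ℝ → ℝ × ℝ × ℝ)
    (hX : X = fun θ : ℝ × ℝ × ℝ =>
      (u * sin θ.1 * cos θ.2.1 + ε * sin (2 * θ.1) * cos (2 * θ.2.1),
       u * sin θ.2.1 * cos θ.2.2 + ε * sin (2 * θ.2.1) * cos (2 * θ.2.2),
       u * sin θ.2.2 * cos θ.1 + ε * sin (2 * θ.2.2) * cos (2 * θ.1) +
         q * (1 - cos (θ.1 - θ.2.1)) * sin (2 * θ.2.2))) :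
    X ((0 : ℝ), (0 : ℝ), (0 : ℝ)) = 0 ∧
    X ((π : ℝ), (0 : ℝ), (0 : ℝ)) = 0 ∧
    X ((0 : ℝ), (π : ℝ), (0 : ℝ)) = 0 ∧
    X ((0 : ℝ), (0 : ℝ), (π : ℝ)) = 0 ∧
    (∀ w : ℝ × ℝ × ℝ,
      fderiv ℝ X ((0 : ℝ), (0 : ℝ), (0 : ℝ)) w =
        ((u + 2 * ε) * w.1, (u + 2 * ε) * w.2.1, (u + 2 * ε) * w.2.2)) ∧
    (∀ w : ℝ × ℝ × ℝ,
      fderiv ℝ X ((π : ℝ), (0 : ℝ), (0 : ℝ)) w =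
        ((-u + 2 * ε) * w.1, (u + 2 * ε) * w.2.1,
          (-u + 2 * ε + 4 * q) * w.2.2)) ∧
    (∀ w : ℝ × ℝ × ℝ,
      fderiv ℝ X ((0 : ℝ), (π : ℝ), (0 : ℝ)) w =
        ((-u + 2 * ε) * w.1, (-u + 2 * ε) * w.2.1,
          (u + 2 * ε + 4 * q) * w.2.2)) ∧
    (∀ w : ℝ × ℝ × ℝ,
      fderiv ℝ X ((0 : ℝ), (0 : ℝ), (π : ℝ)) w =
        ((u + 2 * ε) * w.1, (-u + 2 * ε) * w.2.1, (-u + 2 * ε) * w.2.2)) := by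
  have key : ∀ p w : ℝ × ℝ × ℝ, fderiv ℝ X p w =
      (u * (cos p.1 * w.1) * cos p.2.1 - u * sin p.1 * (sin p.2.1 * w.2.1)
        + ε * (cos (2 * p.1) * (2 * w.1)) * cos (2 * p.2.1)
        - ε * sin (2 * p.1) * (sin (2 * p.2.1) * (2 * w.2.1)),
       u * (cos p.2.1 * w.2.1) * cos p.2.2 - u * sin p.2.1 * (sin p.2.2 * w.2.2)
        + ε * (cos (2 * p.2.1) * (2 * w.2.1)) * cos (2 * p.2.2)
        - ε * sin (2 * p.2.1) * (sin (2 * p.2.2) * (2 * w.2.2)),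
       u * (cos p.2.2 * w.2.2) * cos p.1 - u * sin p.2.2 * (sin p.1 * w.1)
        + ε * (cos (2 * p.2.2) * (2 * w.2.2)) * cos (2 * p.1)
        - ε * sin (2 * p.2.2) * (sin (2 * p.1) * (2 * w.1))
        + q * (sin (p.1 - p.2.1) * (w.1 - w.2.1)) * sin (2 * p.2.2)
        + q * (1 - cos (p.1 - p.2.1)) * (cos (2 * p.2.2) * (2 * w.2.2))) := by
    intro p w
    have h1 : HasFDerivAt (fun θ : ℝ × ℝ × ℝ => θ.1) (ContinuousLinearMap.fst ℝ ℝ (ℝ × ℝ)) p := hasFDerivAt_fst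
    have h0 : HasFDerivAt (fun θ : ℝ × ℝ × ℝ => θ.2) (ContinuousLinearMap.snd ℝ ℝ (ℝ × ℝ)) p := hasFDerivAt_snd
    have h2 : HasFDerivAt (fun θ : ℝ × ℝ × ℝ => θ.2.1)
      ((ContinuousLinearMap.fst ℝ ℝ ℝ).comp (ContinuousLinearMap.snd ℝ ℝ (ℝ × ℝ))) p := h0.fst
    have h3 : HasFDerivAt (fun θ : ℝ × ℝ × ℝ => θ.2.2)
      ((ContinuousLinearMap.snd ℝ ℝ ℝ).comp (ContinuousLinearMap.snd ℝ ℝ (ℝ × ℝ))) p := h0.snd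
    have A := ((h1.sin.const_mul u).mul h2.cos).add
      (((h1.const_mul 2).sin.const_mul ε).mul (h2.const_mul 2).cos)
    have B := ((h2.sin.const_mul u).mul h3.cos).add
      (((h2.const_mul 2).sin.const_mul ε).mul (h3.const_mul 2).cos)
    have C := (((h3.sin.const_mul u).mul h1.cos).add
      (((h3.const_mul 2).sin.const_mul ε).mul (h1.const_mul 2).cos)).add
      ((((h1.sub h2).cos.const_sub 1).const_mul q).mul (h3.const_mul 2).sin)
    have D := A.prodMk (B.prodMk C)
    have D' := (congrArg (fun f => fderiv ℝ f p) hX).trans D.fderiv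
    rw [D']
    refine Prod.ext ?_ (Prod.ext ?_ ?_) <;> simp <;> ring
  refine ⟨?_, ?_, ?_, ?_, ?_, ?_, ?_, ?_⟩
  any_goals (simp [hX]; done)
  all_goals
    intro w
    rw [key]
    refine Prod.ext ?_ (Prod.ext ?_ ?_) <;> simp <;> ring
end
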